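/- Let σ be a type, A = MvPolynomial σ ℂ, and let {·,·} : A × A → A be a Poisson bracket, i.e. a ℂ-bilinear Lie bracket (alternating, satisfying the Jacobi identity) that is a derivation in each argument: {a, bc} = {a,b}·c + b·{a,c}. Let J = MvPolynomial (σ × ℕ) ℂ, let ∂ be the unique ℂ-linear derivation of J with ∂(X_{(i,n)}) = X_{(i,n+1)}, and let ε : A → J be the ℂ-algebra homomorphism with ε(X_i) = X_{(i,0)}. Then there exists a unique family of ℂ-bilinear products μ_n : J × J → J (n ∈ ℕ) satisfying: (sesquilinearity) μ_n(∂a,b) = −n·μ_{n−1}(a,b) and μ_n(a,∂b) = ∂(μ_n(a,b)) + n·μ_{n−1}(a,b) (μ_{−1} := 0); (antisymmetry) μ_n(a,b) = Σ_{j≥0} (−1)^{n+j+1} (1/j!)·∂^j(μ_{n+j}(b,a)); (right Leibniz) μ_n(a, bc) = μ_n(a,b)·c + b·μ_n(a,c); and (initial values) μ_0(ε(a), ε(b)) = ε({a,b}) and μ_n(ε(a), ε(b)) = 0 for n ≥ 1 and a, b ∈ A. Moreover this family satisfies the finiteness and Jacobi axioms, so that (J, ∂, {μ_n}) is a Lie*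 algebra whose products are derivations of the multiplication — i.e. the jet algebra J∞A canonically becomes a coisson (Poisson vertex) algebra. -/

import Mathlib

/-- The jet algebra `J∞A` of `A = MvPolynomial σ ℂ`, realized as
`MvPolynomial (σ × ℕ) ℂ`. -/
abbrev Jet (σ : Type*) := MvPolynomial (σ × ℕ) ℂ

/-- The canonical derivation `∂` of the jet algebra, `∂(X_{(i,n)}) = X_{(i,n+1)}`. -/
noncomputable def jetD (σ : Type*) : Derivation ℂ (Jet σ) (Jet σ) :=
  MvPolynomial.mkDerivation ℂ fun p : σ × ℕ => MvPolynomial.X (p.1, p.2 + 1)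

/-- The embedding `ε : A → J∞A`, `X_i ↦ X_{(i,0)}`. -/
noncomputable def jetEmb (σ : Type*) : MvPolynomial σ ℂ →ₐ[ℂ] Jet σ :=
  MvPolynomial.rename fun i : σ => (i, 0)

/-- The conditions on the family `{μ_n}` of products on `J∞A`: sesquilinearity
(with `μ_{−1} := 0` encoded by the vanishing coefficient at `n = 0`), antisymmetry,
the right Leibniz rule, and the initial values `μ₀(ε a, ε b) = ε {a,b}`,
`μ_n(ε a, ε b) = 0` for `n ≥ 1`. -/
def JetCond (σ : Type*)
    (P : MvPolynomial σ ℂ →ₗ[ℂ] MvPolynomial σ ℂ →ₗ[ℂ] MvPolynomial σ ℂ)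
    (mu : ℕ → Jet σ →ₗ[ℂ] Jet σ →ₗ[ℂ] Jet σ) : Prop :=
  (∀ (n : ℕ) (a b : Jet σ), mu n (jetD σ a) b = (-(n : ℂ)) • mu (n - 1) a b) ∧
  (∀ (n : ℕ) (a b : Jet σ),
      mu n a (jetD σ b) = jetD σ (mu n a b) + (n : ℂ) • mu (n - 1) a b) ∧
  (∀ (n : ℕ) (a b : Jet σ),
      mu n a b = ∑ᶠ j : ℕ,
        ((-1 : ℂ) ^ (n + j + 1) * ((j.factorial : ℂ))⁻¹) •
          (((jetD σ).toLinearMap ^ j) (mu (n + j) b a))) ∧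
  (∀ (n : ℕ) (a b c : Jet σ), mu n a (b * c) = mu n a b * c + b * mu n a c) ∧
  (∀ a b : MvPolynomial σ ℂ, mu 0 (jetEmb σ a) (jetEmb σ b) = jetEmb σ (P a b)) ∧
  (∀ n : ℕ, 1 ≤ n → ∀ a b : MvPolynomial σ ℂ, mu n (jetEmb σ a) (jetEmb σ b) = 0)

/-!
A λ-bracket `{a_λ b} = ∑ μ_n(a, b) λⁿ / n!` with values in `J[λ]` packages all the products at once:
sesquilinearity says that `∂` acts as `-λ` on the left and as `∂ + λ` on the right, and
skew-symmetry is the involution `p(λ) ↦ -p(-λ-∂)`. Sesquilinearity and the right Leibniz rule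
determine `{a_λ ·}` from its values at the generators `X_{(i,0)}`, so skew-symmetry and the initial
values determine the whole bracket; conversely, extending the initial values first to the right and
then, through skew-symmetry, to the left defines it.

In the Jacobi identity `{a_λ {b_μ c}} - {b_μ {a_λ c}} = {{a_λ b}_{λ+μ} c}`, both sides are
derivations in `c` that turn `∂` into `∂ + λ + μ`, and by skew-symmetry the identity is invariant
under permutations of `a`, `b`, `c`. Hence it follows from its validity on the generators, where it
is the Jacobi identity of the Poisson bracket.
-/

namespace LambdaBracket

open Polynomial

section OperatorCalculus

variable {k A A' M : Type*} [CommRing k] [CommRing A] [Algebra k A] [CommRing A'] [Algebra k A']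
  [AddCommMonoid M] [Module k M]

theorem induction_C_X_mul {motive : A[X] → Prop} (p : A[X]) (C : ∀ x, motive (C x))
    (add : ∀ p q, motive p → motive q → motive (p + q))
    (X_mul : ∀ p, motive p → motive (X * p)) : motive p := by
  induction p using Polynomial.induction_on' with
  | add p q hp hq => exact add p q hp hq
  | monomial n x =>
    induction n with
    | zero => exact C x
    | succ n ih => simpa only [X_mul_monomial] using X_mul _ ih

/-- Evaluation of polynomials at an operator: `evalOp f T (∑ xⱼ λʲ) = ∑ Tʲ (f xⱼ)`. It is the
unique linear extension of `f` that turns multiplication by the variable into `T`. -/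
noncomputable def evalOp (f : A →ₗ[k] M) (T : Module.End k M) : A[X] →ₗ[k] M :=
  lsum fun j => (T ^ j) ∘ₗ f

theorem evalOp_monomial (f : A →ₗ[k] M) (T : Module.End k M) (j : ℕ) (x : A) :
    evalOp f T (monomial j x) = (T ^ j) (f x) := by
  simp [evalOp]

theorem evalOp_C (f : A →ₗ[k] M) (T : Module.End k M) (x : A) : evalOp f T (C x) = f x :=
  evalOp_monomial f T 0 x

theorem evalOp_X_mul (f : A →ₗ[k] M) (T : Module.End k M) (p : A[X]) :
    evalOp f T (X * p) = T (evalOp f T p) := by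
  induction p using Polynomial.induction_on' with
  | add p q hp hq => simp only [mul_add, map_add, hp, hq]
  | monomial j x => rw [X_mul_monomial, evalOp_monomial, evalOp_monomial, pow_succ']; rfl

/-- The coefficientwise extension `∑ xⱼ λʲ ↦ ∑ f(xⱼ) λʲ` of a linear map `f`. -/
noncomputable def mapCoeff (f : A →ₗ[k] A') : A[X] →ₗ[k] A'[X] :=
  evalOp ((CAlgHom (R := k)).toLinearMap ∘ₗ f) (LinearMap.mulLeft k X)

@[simp]
theorem mapCoeff_C (f : A →ₗ[k] A') (x : A) : mapCoeff f (C x) = C (f x) :=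
  evalOp_C _ _ x

theorem mapCoeff_X_mul (f : A →ₗ[k] A') (p : A[X]) : mapCoeff f (X * p) = X * mapCoeff f p :=
  evalOp_X_mul _ _ p

@[simp]
theorem coeff_mapCoeff (f : A →ₗ[k] A') (p : A[X]) (n : ℕ) :
    (mapCoeff f p).coeff n = f (p.coeff n) := by
  induction p using induction_C_X_mul generalizing n with
  | C x => simp only [mapCoeff_C, coeff_C, apply_ite f, map_zero]
  | add p q hp hq => simp only [map_add, coeff_add, hp, hq]
  | X_mul p hp => cases n <;> simp [mapCoeff_X_mul, hp]

/-- The operator `D + λ` on `A[λ]`. -/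
noncomputable def addVar (D : Module.End k A) : Module.End k A[X] :=
  mapCoeff D + LinearMap.mulLeft k X

theorem addVar_apply (D : Module.End k A) (p : A[X]) : addVar D p = mapCoeff D p + X * p := rfl

theorem addVar_X_mul (D : Module.End k A) (p : A[X]) : addVar D (X * p) = X * addVar D p := by
  rw [addVar_apply, addVar_apply, mapCoeff_X_mul, mul_add]

theorem mapCoeff_addVar {f : A →ₗ[k] A'} {D : Module.End k A} {D' : Module.End k A'}
    (hf : ∀ x, f (D x) = D' (f x)) (p : A[X]) :
    mapCoeff f (addVar D p) = addVar D' (mapCoeff f p) := by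
  have hcoeff : mapCoeff f (mapCoeff D p) = mapCoeff D' (mapCoeff f p) := by
    ext n; simp only [coeff_mapCoeff, hf]
  rw [addVar_apply, addVar_apply, map_add, mapCoeff_X_mul, hcoeff]

theorem addVar_smul (d : Derivation k A A) (b : A) (p : A[X]) :
    addVar d.toLinearMap (b • p) = b • addVar d.toLinearMap p + d b • p := by
  ext n
  simp only [addVar_apply, mul_smul_comm, coeff_add, coeff_mapCoeff, coeff_smul, smul_eq_mul,
    Derivation.coeFn_coe, Derivation.leibniz]
  ring

theorem coeff_addVar_pow_C (D : Module.End k A) (j n : ℕ) (x : A) :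
    ((addVar D ^ j) (C x)).coeff n = (j.choose n : k) • (D ^ (j - n)) x := by
  induction j generalizing n with
  | zero => cases n <;> simp
  | succ j ih =>
    rw [pow_succ', Module.End.mul_apply, addVar_apply, coeff_add, coeff_mapCoeff, ih]
    cases n with
    | zero => simp [pow_succ']
    | succ n =>
      rw [coeff_X_mul, ih, Nat.add_sub_add_right, Nat.choose_succ_succ]
      rcases lt_or_ge n j with hnj | hjn
      · rw [show j - n = j - (n + 1) + 1 by omega, pow_succ', Module.End.mul_apply, map_smul,
          Nat.cast_add, add_smul, add_comm]
      · simp [Nat.choose_eq_zero_of_lt (Nat.lt_succ_of_le hjn)]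

/-- The substitution `p(λ) ↦ -p(-λ-D)`, with `D` acting on the coefficients from the left, which
expresses skew-symmetry of a λ-bracket as `{a_λ b} = skew D {b_λ a}`. -/
noncomputable def skew (D : Module.End k A) : A[X] →ₗ[k] A[X] :=
  evalOp (-(CAlgHom (R := k)).toLinearMap) (-addVar D)

@[simp]
theorem skew_C (D : Module.End k A) (x : A) : skew D (C x) = -C x :=
  evalOp_C _ _ x

theorem skew_X_mul (D : Module.End k A) (p : A[X]) : skew D (X * p) = -addVar D (skew D p) :=
  evalOp_X_mul _ _ p

theorem mapCoeff_skew {f : A →ₗ[k] A'} {D : Module.End k A} {D' : Module.End k A'}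
    (hf : ∀ x, f (D x) = D' (f x)) (p : A[X]) :
    mapCoeff f (skew D p) = skew D' (mapCoeff f p) := by
  induction p using induction_C_X_mul with
  | C x => simp only [skew_C, map_neg, mapCoeff_C]
  | add p q hp hq => simp only [map_add, hp, hq]
  | X_mul p hp => rw [skew_X_mul, map_neg, mapCoeff_addVar hf, hp, mapCoeff_X_mul, skew_X_mul]

theorem skew_addVar (D : Module.End k A) (p : A[X]) : skew D (addVar D p) = -(X * skew D p) := by
  rw [addVar_apply, map_add, ← mapCoeff_skew (fun _ => rfl), skew_X_mul, addVar_apply]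
  abel

@[simp]
theorem skew_skew (D : Module.End k A) (p : A[X]) : skew D (skew D p) = p := by
  induction p using induction_C_X_mul with
  | C x => simp
  | add p q hp hq => simp only [map_add, hp, hq]
  | X_mul p hp => rw [skew_X_mul, map_neg, skew_addVar, hp, neg_neg]

theorem skew_smul_skew_X_mul (d : Derivation k A A) (b : A) (p : A[X]) :
    skew d.toLinearMap (b • skew d.toLinearMap (X * p)) =
      X * skew d.toLinearMap (b • skew d.toLinearMap p) +
        skew d.toLinearMap (d b • skew d.toLinearMap p) := by
  rw [skew_X_mul, smul_neg, ← sub_eq_of_eq_add (addVar_smul d b _), map_neg, map_sub, skew_addVar]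
  abel

theorem skew_smul_skew_smul (d : Derivation k A A) (a b : A) (p : A[X]) :
    skew d.toLinearMap (b • skew d.toLinearMap (a • p)) =
      a • skew d.toLinearMap (b • skew d.toLinearMap p) := by
  induction p using induction_C_X_mul generalizing b with
  | C x => simp only [smul_C, skew_C, smul_neg, map_neg, smul_eq_mul, mul_left_comm]
  | add p q hp hq => simp only [smul_add, map_add, hp, hq]
  | X_mul p hp =>
    rw [← mul_smul_comm, skew_smul_skew_X_mul, skew_smul_skew_X_mul, hp, hp, mul_smul_comm,
      smul_add]

/-- The conjugate by `skew d` of multiplication by `b`. It governs the Leibniz rule of a λ-bracket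
in its left argument, and it is `A`-linear although `skew d` is not. -/
noncomputable def skewConj (d : Derivation k A A) (b : A) : A[X] →ₗ[A] A[X] where
  toFun p := skew d.toLinearMap (b • skew d.toLinearMap p)
  map_add' p q := by simp only [map_add, smul_add]
  map_smul' a p := skew_smul_skew_smul d a b p

theorem skewConj_apply (d : Derivation k A A) (b : A) (p : A[X]) :
    skewConj d b p = skew d.toLinearMap (b • skew d.toLinearMap p) := rfl

theorem skewConj_addVar (d : Derivation k A A) (b : A) (p : A[X]) :
    skewConj d b (addVar d.toLinearMap p) =
      addVar d.toLinearMap (skewConj d b p) := by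
  rw [skewConj_apply, skewConj_apply, skew_addVar, smul_neg, ← mul_smul_comm, map_neg, skew_X_mul,
    neg_neg]

theorem coeff_skew_monomial (D : Module.End k A) (j n : ℕ) (x : A) :
    (skew D (monomial j x)).coeff n =
      ((-1 : k) ^ (j + 1) * (j.choose n : k)) • (D ^ (j - n)) x := by
  have hpow : (-addVar D) ^ j = (-1 : k) ^ j • addVar D ^ j := by
    rw [← neg_one_smul k, _root_.smul_pow]
  rw [skew, evalOp_monomial, hpow, LinearMap.smul_apply, LinearMap.neg_apply, map_neg, smul_neg,
    coeff_neg, coeff_smul]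
  change -((-1 : k) ^ j • ((addVar D ^ j) (C x)).coeff n) = _
  rw [coeff_addVar_pow_C, smul_smul, ← neg_smul, pow_succ]
  ring_nf

end OperatorCalculus

section Antisymmetry

variable {K A : Type*} [Field K] [CharZero K] [CommRing A] [Algebra K A]

theorem factorial_mul_choose_eq_inv_mul_factorial (n j : ℕ) :
    (n.factorial : K) * ((n + j).choose n : K) = (j.factorial : K)⁻¹ * ((n + j).factorial : K) := by
  have hj : (j.factorial : K) ≠ 0 := Nat.cast_ne_zero.2 j.factorial_ne_zero
  rw [eq_inv_mul_iff_mul_eq₀ hj, Nat.choose_symm_add]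
  exact_mod_cast by linarith [Nat.add_choose_mul_factorial_mul_factorial n j]

theorem factorial_smul_coeff_skew (D : Module.End K A) (p : A[X]) (n : ℕ) :
    (n.factorial : K) • (skew D p).coeff n =
      ∑ᶠ j : ℕ, ((-1 : K) ^ (n + j + 1) * (j.factorial : K)⁻¹) •
        (D ^ j) (((n + j).factorial : K) • p.coeff (n + j)) := by
  have hsupp (q : A[X]) : (Function.support fun j : ℕ =>
      ((-1 : K) ^ (n + j + 1) * (j.factorial : K)⁻¹) •
        (D ^ j) (((n + j).factorial : K) • q.coeff (n + j))).Finite := by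
    refine (Set.finite_Iic q.natDegree).subset fun j hj => Set.mem_Iic.2 ?_
    by_contra! hlt
    exact hj (by simp [coeff_eq_zero_of_natDegree_lt (show q.natDegree < n + j by omega)])
  induction p using Polynomial.induction_on' with
  | add p q hp hq =>
    simp only [map_add, coeff_add, smul_add, hp, hq]
    rw [finsum_add_distrib (hsupp p) (hsupp q)]
  | monomial i x =>
    rw [coeff_skew_monomial]
    rcases lt_or_ge i n with hin | hni
    · have hcoeff (j : ℕ) : (monomial i x).coeff (n + j) = 0 := coeff_monomial_of_ne _ (by omega)
      simp [hcoeff, Nat.choose_eq_zero_of_lt hin]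
    · obtain ⟨j, rfl⟩ := Nat.exists_eq_add_of_le hni
      rw [finsum_eq_single _ j fun l hl => by
        rw [coeff_monomial_of_ne _ (by omega), smul_zero, map_zero, smul_zero]]
      rw [coeff_monomial_same, map_smul, smul_smul, smul_smul, Nat.add_sub_cancel_left]
      congr 1
      linear_combination (-1 : K) ^ (n + j + 1) *
        factorial_mul_choose_eq_inv_mul_factorial (K := K) n j

end Antisymmetry

section TwoVariables

/-! Elements of `A[X][X]` are polynomials in `λ = C X` and `μ = X`. -/

variable {k A : Type*} [CommRing k] [CommRing A] [Algebra k A]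

theorem mapCoeff_mulLeft_X (w : A[X][X]) :
    mapCoeff (LinearMap.mulLeft k (X : A[X])) w = C X * w := by
  ext n : 1
  rw [coeff_mapCoeff, coeff_C_mul, LinearMap.mulLeft_apply]

theorem coeff_coeff_swap (w : A[X][X]) (m n : ℕ) :
    ((Bivariate.swap w).coeff m).coeff n = (w.coeff n).coeff m := by
  induction w using Polynomial.induction_on' with
  | add v w hv hw => simp only [map_add, coeff_add, hv, hw]
  | monomial i p =>
    induction p using Polynomial.induction_on' with
    | add p q hp hq => simp only [map_add, coeff_add, hp, hq]
    | monomial j x =>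
      rw [Bivariate.swap_monomial_monomial]
      simp only [coeff_monomial]
      split_ifs <;> simp_all [coeff_monomial]

/-- The substitution `p(λ) ↦ p(λ + μ)`. -/
noncomputable def evalAdd : A[X] →ₐ[A] A[X][X] :=
  aeval (C X + X)

theorem evalAdd_C (x : A) : evalAdd (C x) = C (C x) :=
  aeval_C _ x

theorem evalAdd_X : evalAdd (X : A[X]) = C X + X :=
  aeval_X _

theorem coeff_evalAdd (p : A[X]) (m : ℕ) : (evalAdd p).coeff m = hasseDeriv m p := by
  have htaylor : evalAdd p = taylor X (p.map C) := by
    rw [taylor_apply, comp, eval₂_map, evalAdd, aeval_def, add_comm]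
    rfl
  have hmap : hasseDeriv m (p.map C) = (hasseDeriv m p).map (C : A →+* A[X]) := by
    ext n : 1
    simp [hasseDeriv_coeff]
  rw [htaylor, taylor_coeff, hmap, eval_map, eval₂_C_X]

theorem swap_evalAdd (p : A[X]) : Bivariate.swap (evalAdd p) = evalAdd p := by
  have hcomp : (Bivariate.swap (R := A)).toAlgHom.comp evalAdd = evalAdd :=
    algHom_ext (by simp [evalAdd_X, add_comm, Bivariate.swap_X, Bivariate.swap_Y])
  exact DFunLike.congr_fun hcomp p

theorem addVar_addVar_apply (D : Module.End k A) (w : A[X][X]) :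
    addVar (addVar D) w = mapCoeff (mapCoeff D) w + (C X + X) * w := by
  have hsplit : mapCoeff (addVar D) w = mapCoeff (mapCoeff D) w + C X * w := by
    ext m : 1
    simp [addVar_apply]
  rw [addVar_apply, hsplit]
  ring

theorem swap_addVar_addVar (D : Module.End k A) (w : A[X][X]) :
    Bivariate.swap (addVar (addVar D) w) = addVar (addVar D) (Bivariate.swap w) := by
  have hcoeff : Bivariate.swap (mapCoeff (mapCoeff D) w) =
      mapCoeff (mapCoeff D) (Bivariate.swap w) := by
    ext m n
    simp only [coeff_coeff_swap, coeff_mapCoeff]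
  rw [addVar_addVar_apply, addVar_addVar_apply, map_add, map_mul, map_add, Bivariate.swap_X,
    Bivariate.swap_Y, hcoeff, add_comm X]

theorem evalAdd_addVar (D : Module.End k A) (p : A[X]) :
    evalAdd (addVar D p) = addVar (addVar D) (evalAdd p) := by
  have hcoeff : evalAdd (mapCoeff D p) = mapCoeff (mapCoeff D) (evalAdd p) := by
    ext m n
    simp [coeff_evalAdd, hasseDeriv_coeff, ← nsmul_eq_mul]
  rw [addVar_apply, map_add, map_mul, evalAdd_X, hcoeff, addVar_addVar_apply]

theorem skew_addVar_map_C (D : Module.End k A) (p : A[X]) :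
    skew (addVar D) (p.map C) = evalAdd (skew D p) := by
  induction p using induction_C_X_mul with
  | C x => simp [evalAdd_C]
  | add p q hp hq => simp only [Polynomial.map_add, map_add, hp, hq]
  | X_mul p hp =>
    rw [Polynomial.map_mul, map_X, skew_X_mul, hp, skew_X_mul, map_neg, evalAdd_addVar]

theorem skew_addVar_C_X_mul (D : Module.End k A) (w : A[X][X]) :
    skew (addVar D) (C X * w) = C X * skew (addVar D) w := by
  rw [← mapCoeff_mulLeft_X (k := k), ← mapCoeff_mulLeft_X (k := k), mapCoeff_skew]
  exact fun p => (addVar_X_mul D p).symm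

theorem addVar_addVar_C_X_mul (D : Module.End k A) (w : A[X][X]) :
    addVar (addVar D) (C X * w) = C X * addVar (addVar D) w := by
  rw [← mapCoeff_mulLeft_X (k := k), ← mapCoeff_mulLeft_X (k := k), mapCoeff_addVar]
  exact fun p => (addVar_X_mul D p).symm

end TwoVariables

section Brackets

variable {k A : Type*} [CommRing k] [CommRing A] [Algebra k A]

/-- `B a b = {a_λ b}` is a skew-symmetric sesquilinear λ-bracket on the algebra `A` with operator
`D`. The right Leibniz rule is encoded in the type of `B`. -/
structure IsSkewBracket (D : Module.End k A) (B : A →ₗ[k] Derivation k A A[X]) : Prop where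
  map_left (a b : A) : B (D a) b = -(X * B a b)
  map_right (a b : A) : B a (D b) = addVar D (B a b)
  skew_eq (a b : A) : B a b = skew D (B b a)

/-- The double bracket `q(λ) ↦ {q(λ)_{λ+μ} ·}`, with powers of `λ` taken out of the bracket. -/
noncomputable def bracketAdd (B : A →ₗ[k] Derivation k A A[X]) :
    A[X] →ₗ[k] Derivation k A A[X][X] :=
  evalOp ((evalAdd.toLinearMap.compDer : _ →ₗ[A] Derivation k A A[X][X]).restrictScalars k ∘ₗ B)
    ((LinearMap.mulLeft A (C X)).compDer.restrictScalars k)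

theorem bracketAdd_C (B : A →ₗ[k] Derivation k A A[X]) (x c : A) :
    bracketAdd B (C x) c = evalAdd (B x c) := by
  rw [bracketAdd, evalOp_C]
  rfl

theorem bracketAdd_X_mul (B : A →ₗ[k] Derivation k A A[X]) (q : A[X]) (c : A) :
    bracketAdd B (X * q) c = C X * bracketAdd B q c := by
  rw [bracketAdd, evalOp_X_mul]
  rfl

theorem coeff_coeff_bracketAdd (B : A →ₗ[k] Derivation k A A[X]) (q : A[X]) (c : A) (n m : ℕ) :
    ((bracketAdd B q c).coeff m).coeff n = ∑ j ∈ Finset.range (n + 1),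
      ((n - j + m).choose m : k) • (B (q.coeff j) c).coeff (n - j + m) := by
  induction q using induction_C_X_mul generalizing n with
  | C x =>
    rw [Finset.sum_range_succ', Finset.sum_eq_zero fun j _ => by simp, bracketAdd_C, coeff_evalAdd,
      hasseDeriv_coeff]
    simp [Nat.cast_smul_eq_nsmul]
  | add p q hp hq =>
    simp only [map_add, Derivation.add_apply, coeff_add, hp, hq, smul_add, Finset.sum_add_distrib]
  | X_mul q hq =>
    rw [bracketAdd_X_mul, coeff_C_mul]
    cases n with
    | zero => simp
    | succ n =>
      rw [coeff_X_mul, hq, Finset.sum_range_succ' _ (n + 1)]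
      simp

/-- The Jacobi identity `{a_λ {b_μ c}} = {b_μ {a_λ c}} + {{a_λ b}_{λ+μ} c}` for one triple. -/
def Jacobi (B : A →ₗ[k] Derivation k A A[X]) (a b c : A) : Prop :=
  mapCoeff (B a).toLinearMap (B b c) =
    Bivariate.swap (mapCoeff (B b).toLinearMap (B a c)) + bracketAdd B (B a b) c

theorem mapCoeff_smul (F : Derivation k A A[X]) (x : A) (p : A[X]) :
    mapCoeff F.toLinearMap (x • p) =
      x • mapCoeff F.toLinearMap p + C (F x) * p.map C := by
  ext n : 1
  simp [mul_comm, smul_eq_C_mul]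

theorem swap_mapCoeff_smul (F : Derivation k A A[X]) (x : A) (p : A[X]) :
    Bivariate.swap (mapCoeff F.toLinearMap (x • p)) =
      x • Bivariate.swap (mapCoeff F.toLinearMap p) + (F x).map C * C p := by
  rw [mapCoeff_smul, map_add, map_mul, map_smul, Bivariate.swap_C, Bivariate.swap_map_C]

/-- The commutator `c ↦ {a_λ {b_μ c}} - {b_μ {a_λ c}}`, a derivation although its two terms are
not. -/
noncomputable def bracketCommutator (B : A →ₗ[k] Derivation k A A[X]) (a b : A) :
    Derivation k A A[X][X] :=
  Derivation.mk'
    (mapCoeff (B a).toLinearMap ∘ₗ (B b).toLinearMap -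
      ((Bivariate.swap (R := A)).toLinearMap.restrictScalars k) ∘ₗ
        mapCoeff (B b).toLinearMap ∘ₗ (B a).toLinearMap)
    fun x y => by
      change mapCoeff (B a).toLinearMap (B b (x * y)) -
        Bivariate.swap (mapCoeff (B b).toLinearMap (B a (x * y))) =
          x • (mapCoeff (B a).toLinearMap (B b y) -
            Bivariate.swap (mapCoeff (B b).toLinearMap (B a y))) +
          y • (mapCoeff (B a).toLinearMap (B b x) -
            Bivariate.swap (mapCoeff (B b).toLinearMap (B a x)))
      simp only [Derivation.leibniz, map_add, swap_mapCoeff_smul]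
      simp only [mapCoeff_smul, smul_sub]
      ring

theorem bracketCommutator_apply (B : A →ₗ[k] Derivation k A A[X]) (a b c : A) :
    bracketCommutator B a b c = mapCoeff (B a).toLinearMap (B b c) -
      Bivariate.swap (mapCoeff (B b).toLinearMap (B a c)) := rfl

theorem jacobi_iff_bracketCommutator_eq {B : A →ₗ[k] Derivation k A A[X]} {a b c : A} :
    Jacobi B a b c ↔ bracketCommutator B a b c = bracketAdd B (B a b) c := by
  rw [bracketCommutator_apply, sub_eq_iff_eq_add', Jacobi]

namespace IsSkewBracket

variable {D : Module.End k A} {B : A →ₗ[k] Derivation k A A[X]} (hB : IsSkewBracket D B)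

include hB

theorem bracketAdd_addVar (q : A[X]) (c : A) :
    bracketAdd B (addVar D q) c = -(X * bracketAdd B q c) := by
  have hD : bracketAdd B (mapCoeff D q) c = -((C X + X) * bracketAdd B q c) := by
    induction q using induction_C_X_mul with
    | C x => rw [mapCoeff_C, bracketAdd_C, hB.map_left, map_neg, map_mul, evalAdd_X, bracketAdd_C]
    | add p q hp hq =>
      simp only [map_add, Derivation.add_apply, hp, hq]
      ring
    | X_mul q hq =>
      rw [mapCoeff_X_mul, bracketAdd_X_mul, hq, bracketAdd_X_mul]
      ring
  rw [addVar_apply, map_add, Derivation.add_apply, hD, bracketAdd_X_mul]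
  ring

theorem bracketAdd_skew (q : A[X]) (c : A) :
    bracketAdd B (skew D q) c = -Bivariate.swap (bracketAdd B q c) := by
  induction q using induction_C_X_mul with
  | C x => simp only [skew_C, map_neg, Derivation.neg_apply, bracketAdd_C, swap_evalAdd]
  | add p q hp hq =>
    simp only [map_add, Derivation.add_apply, hp, hq]
    ring
  | X_mul q hq =>
    rw [skew_X_mul, map_neg, Derivation.neg_apply, hB.bracketAdd_addVar, hq, bracketAdd_X_mul,
      map_mul, Bivariate.swap_X]
    ring

theorem bracketAdd_map_right (q : A[X]) (c : A) :
    bracketAdd B q (D c) = addVar (addVar D) (bracketAdd B q c) := by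
  induction q using induction_C_X_mul with
  | C x => rw [bracketAdd_C, hB.map_right, evalAdd_addVar, bracketAdd_C]
  | add p q hp hq => simp only [map_add, Derivation.add_apply, hp, hq]
  | X_mul q hq => rw [bracketAdd_X_mul, hq, bracketAdd_X_mul, addVar_addVar_C_X_mul]

theorem skew_swap_mapCoeff (c : A) (q : A[X]) :
    skew (addVar D) (Bivariate.swap (mapCoeff (B c).toLinearMap q)) = bracketAdd B q c := by
  induction q using induction_C_X_mul with
  | C x =>
    rw [mapCoeff_C, Bivariate.swap_C, skew_addVar_map_C, bracketAdd_C, hB.skew_eq x c]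
    rfl
  | add p q hp hq => simp only [map_add, Derivation.add_apply, hp, hq]
  | X_mul q hq =>
    rw [mapCoeff_X_mul, map_mul, Bivariate.swap_Y, skew_addVar_C_X_mul, hq, bracketAdd_X_mul]

theorem jacobi_swap_right {a b c : A} (h : Jacobi B a c b) : Jacobi B a b c := by
  have hskew (b : A) (q : A[X]) : skew (addVar D) (bracketAdd B q b) =
      Bivariate.swap (mapCoeff (B b).toLinearMap q) := by
    rw [← hB.skew_swap_mapCoeff, skew_skew]
  calc mapCoeff (B a).toLinearMap (B b c)
      = mapCoeff (B a).toLinearMap (skew D (B c b)) := by rw [← hB.skew_eq]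
    _ = skew (addVar D) (mapCoeff (B a).toLinearMap (B c b)) := mapCoeff_skew (hB.map_right a) _
    _ = skew (addVar D) (Bivariate.swap (mapCoeff (B c).toLinearMap (B a b)) +
          bracketAdd B (B a c) b) := by rw [h]
    _ = bracketAdd B (B a b) c + Bivariate.swap (mapCoeff (B b).toLinearMap (B a c)) := by
        rw [map_add, hB.skew_swap_mapCoeff, hskew]
    _ = _ := add_comm _ _

theorem jacobi_swap_left {a b c : A} (h : Jacobi B b a c) : Jacobi B a b c := by
  rw [Jacobi] at h ⊢
  rw [h, map_add, Bivariate.swap_swap_apply, hB.skew_eq a b, hB.bracketAdd_skew]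
  ring

theorem bracketCommutator_map_right (a b c : A) :
    bracketCommutator B a b (D c) = addVar (addVar D) (bracketCommutator B a b c) := by
  rw [bracketCommutator_apply, bracketCommutator_apply, map_sub, hB.map_right, hB.map_right,
    mapCoeff_addVar (hB.map_right a), mapCoeff_addVar (hB.map_right b), swap_addVar_addVar]

end IsSkewBracket

end Brackets

section Generators

variable {k A M : Type*} [CommRing k] [CommRing A] [Algebra k A] [AddCommMonoid M] [Module k M]
  [Module A M]

/-- The algebra `A` is generated by the iterated images under `D` of the elements of `G`. -/
def DiffGenerates (D : Module.End k A) (G : Set A) : Prop :=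
  Algebra.adjoin k {x | ∃ n : ℕ, ∃ g ∈ G, (D ^ n) g = x} = ⊤

theorem DiffGenerates.derivation_ext {D : Module.End k A} {G : Set A} (hG : DiffGenerates D G)
    {F F' : Derivation k A M} {T : M → M} (hF : ∀ b, F (D b) = T (F b))
    (hF' : ∀ b, F' (D b) = T (F' b)) (h : Set.EqOn F F' G) : F = F' := by
  refine Derivation.ext_of_adjoin_eq_top _ hG ?_
  rintro _ ⟨n, g, hg, rfl⟩
  induction n with
  | zero => exact h hg
  | succ n ih => rw [pow_succ', Module.End.mul_apply, hF, hF', ih]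

theorem IsSkewBracket.jacobi_of_generators {D : Module.End k A} {B : A →ₗ[k] Derivation k A A[X]}
    (hB : IsSkewBracket D B) {G : Set A} (hG : DiffGenerates D G)
    (h : ∀ a ∈ G, ∀ b ∈ G, ∀ c ∈ G, Jacobi B a b c) (a b c : A) : Jacobi B a b c := by
  have hext {a b : A} (h : ∀ c ∈ G, Jacobi B a b c) (c : A) : Jacobi B a b c := by
    refine jacobi_iff_bracketCommutator_eq.2 (DFunLike.congr_fun ?_ c)
    exact hG.derivation_ext (hB.bracketCommutator_map_right a b) (hB.bracketAdd_map_right (B a b))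
      fun c hc => jacobi_iff_bracketCommutator_eq.1 (h c hc)
  have htwo : ∀ a ∈ G, ∀ b ∈ G, ∀ c, Jacobi B a b c := fun a ha b hb => hext (h a ha b hb)
  have hone : ∀ a ∈ G, ∀ b c, Jacobi B a b c := fun a ha b =>
    hext fun c hc => hB.jacobi_swap_right (htwo a ha c hc b)
  exact hext (fun c hc => hB.jacobi_swap_right (hB.jacobi_swap_left (hone c hc a b))) c

end Generators

section Products

variable {k A : Type*} [CommRing k] [CommRing A] [Algebra k A]

/-- The `n`-th product `μ_n` of a λ-bracket, normalized by `{a_λ b} = ∑ μ_n(a, b) λⁿ / n!`. -/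
noncomputable def product (B : A →ₗ[k] Derivation k A A[X]) (n : ℕ) : A →ₗ[k] A →ₗ[k] A :=
  LinearMap.mk₂ k (fun a b => (n.factorial : k) • (B a b).coeff n)
    (fun a a' b => by rw [map_add, Derivation.add_apply, coeff_add, smul_add])
    (fun x a b => by rw [map_smul, Derivation.smul_apply, coeff_smul, smul_comm])
    (fun a b b' => by rw [map_add, coeff_add, smul_add])
    (fun x a b => by rw [Derivation.map_smul, coeff_smul, smul_comm])

theorem product_apply (B : A →ₗ[k] Derivation k A A[X]) (n : ℕ) (a b : A) :
    product B n a b = (n.factorial : k) • (B a b).coeff n := rfl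

theorem product_eq_zero_of_natDegree_lt (B : A →ₗ[k] Derivation k A A[X]) {n : ℕ} {a b : A}
    (hn : (B a b).natDegree < n) : product B n a b = 0 := by
  rw [product_apply, coeff_eq_zero_of_natDegree_lt hn, smul_zero]

theorem product_mul_right (B : A →ₗ[k] Derivation k A A[X]) (n : ℕ) (a b c : A) :
    product B n a (b * c) = product B n a b * c + b * product B n a c := by
  simp only [product_apply, Derivation.leibniz, coeff_add, coeff_smul, smul_eq_mul, smul_add,
    smul_mul_assoc, mul_smul_comm, mul_comm c]
  exact add_comm _ _

theorem factorial_smul_coeff_X_mul (p : A[X]) (n : ℕ) :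
    (n.factorial : k) • (X * p).coeff n =
      (n : k) • ((n - 1).factorial : k) • p.coeff (n - 1) := by
  cases n with
  | zero => simp
  | succ n => rw [coeff_X_mul, smul_smul, Nat.add_sub_cancel, Nat.factorial_succ, Nat.cast_mul]

theorem product_product_right (B : A →ₗ[k] Derivation k A A[X]) (n m : ℕ) (a b c : A) :
    product B n a (product B m b c) =
      ((n.factorial * m.factorial : ℕ) : k) • (B a ((B b c).coeff m)).coeff n := by
  rw [product_apply, product_apply, Derivation.map_smul, coeff_smul, smul_smul, Nat.cast_mul]

theorem product_product_left (B : A →ₗ[k] Derivation k A A[X]) (n m : ℕ) (a b c : A) :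
    product B n (product B m a b) c =
      ((n.factorial * m.factorial : ℕ) : k) • (B ((B a b).coeff m) c).coeff n := by
  rw [product_apply, product_apply, map_smul, Derivation.smul_apply, coeff_smul, smul_smul,
    Nat.cast_mul]

theorem factorial_mul_factorial_mul_choose {n j : ℕ} (hj : j ≤ n) (m : ℕ) :
    n.factorial * m.factorial * (n - j + m).choose m =
      n.choose j * ((n - j + m).factorial * j.factorial) := by
  rw [← Nat.choose_mul_factorial_mul_factorial hj,
    ← Nat.add_choose_mul_factorial_mul_factorial (n - j) m]
  ring

theorem Jacobi.coeff_coeff_sub {B : A →ₗ[k] Derivation k A A[X]} {a b c : A}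
    (h : Jacobi B a b c) (n m : ℕ) :
    (B a ((B b c).coeff m)).coeff n - (B b ((B a c).coeff n)).coeff m =
      ∑ j ∈ Finset.range (n + 1),
        ((n - j + m).choose m : k) • (B ((B a b).coeff j) c).coeff (n - j + m) := by
  rw [← coeff_coeff_bracketAdd, ← jacobi_iff_bracketCommutator_eq.1 h, bracketCommutator_apply,
    coeff_sub, coeff_sub, coeff_coeff_swap, coeff_mapCoeff, coeff_mapCoeff]
  rfl

theorem Jacobi.product_sub_product {B : A →ₗ[k] Derivation k A A[X]} {a b c : A}
    (h : Jacobi B a b c) (n m : ℕ) :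
    product B n a (product B m b c) - product B m b (product B n a c) =
      ∑ᶠ j : ℕ, (n.choose j : k) • product B (n + m - j) (product B j a b) c := by
  have hsupport : (Function.support fun j : ℕ =>
      (n.choose j : k) • product B (n + m - j) (product B j a b) c) ⊆ Finset.range (n + 1) := by
    intro j hj
    rw [Finset.coe_range, Set.mem_Iio]
    by_contra! hlt
    exact hj (by simp [Nat.choose_eq_zero_of_lt hlt])
  rw [finsum_eq_sum_of_support_subset _ hsupport, product_product_right, product_product_right,
    mul_comm m.factorial, ← smul_sub, h.coeff_coeff_sub, Finset.smul_sum]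
  refine Finset.sum_congr rfl fun j hj => ?_
  have hjn : j ≤ n := Finset.mem_range_succ_iff.1 hj
  rw [Nat.sub_add_comm hjn, product_product_left, smul_smul, smul_smul, ← Nat.cast_mul,
    ← Nat.cast_mul, factorial_mul_factorial_mul_choose hjn]

namespace IsSkewBracket

variable {D : Module.End k A} {B : A →ₗ[k] Derivation k A A[X]} (hB : IsSkewBracket D B)

include hB

theorem product_map_left (n : ℕ) (a b : A) :
    product B n (D a) b = (-(n : k)) • product B (n - 1) a b := by
  rw [product_apply, hB.map_left, coeff_neg, smul_neg, factorial_smul_coeff_X_mul, neg_smul,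
    product_apply]

theorem product_map_right (n : ℕ) (a b : A) :
    product B n a (D b) = D (product B n a b) + (n : k) • product B (n - 1) a b := by
  rw [product_apply, hB.map_right, addVar_apply, coeff_add, coeff_mapCoeff, smul_add,
    factorial_smul_coeff_X_mul, product_apply, product_apply, map_smul]

end IsSkewBracket

theorem IsSkewBracket.product_skew {K : Type*} [Field K] [CharZero K] [Algebra K A]
    {D : Module.End K A} {B : A →ₗ[K] Derivation K A A[X]} (hB : IsSkewBracket D B) (n : ℕ)
    (a b : A) :
    product B n a b = ∑ᶠ j : ℕ, ((-1 : K) ^ (n + j + 1) * (j.factorial : K)⁻¹) •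
      (D ^ j) (product B (n + j) b a) := by
  rw [product_apply, hB.skew_eq, factorial_smul_coeff_skew]
  rfl

end Products

section Jets

variable {σ M : Type*} [AddCommMonoid M] [Module ℂ M] [Module (Jet σ) M] [IsScalarTower ℂ (Jet σ) M]

theorem jetD_X (i : σ) (n : ℕ) : jetD σ (MvPolynomial.X (i, n)) = MvPolynomial.X (i, n + 1) :=
  MvPolynomial.mkDerivation_X _ _ _

theorem jetD_pow_X_zero (i : σ) (n : ℕ) :
    ((jetD σ).toLinearMap ^ n) (MvPolynomial.X (i, 0)) = MvPolynomial.X (i, n) := by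
  induction n with
  | zero => rfl
  | succ n ih => rw [pow_succ', Module.End.mul_apply, ih, Derivation.coeFn_coe, jetD_X]

theorem jetEmb_X (i : σ) : jetEmb σ (MvPolynomial.X i) = MvPolynomial.X (i, 0) :=
  MvPolynomial.rename_X _ i

theorem diffGenerates_jet :
    DiffGenerates (jetD σ).toLinearMap (Set.range fun i : σ => MvPolynomial.X (i, 0)) := by
  refine top_unique (MvPolynomial.adjoin_range_X.symm.trans_le (Algebra.adjoin_mono ?_))
  rintro _ ⟨⟨i, n⟩, rfl⟩
  exact ⟨n, _, Set.mem_range_self i, jetD_pow_X_zero i n⟩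

/-- The derivation of the jet algebra with prescribed values `q i` at `X_{(i,0)}` that turns `∂`
into `T` (see `jetLift_jetD`). -/
noncomputable def jetLift (T : Module.End ℂ M) : (σ → M) →ₗ[ℂ] Derivation ℂ (Jet σ) M where
  toFun q := MvPolynomial.mkDerivation ℂ fun p => (T ^ p.2) (q p.1)
  map_add' q r := MvPolynomial.derivation_ext fun p => by simp [MvPolynomial.mkDerivation_X]
  map_smul' x q := MvPolynomial.derivation_ext fun p => by simp [MvPolynomial.mkDerivation_X]

theorem jetLift_X (T : Module.End ℂ M) (q : σ → M) (i : σ) (n : ℕ) :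
    jetLift T q (MvPolynomial.X (i, n)) = (T ^ n) (q i) :=
  MvPolynomial.mkDerivation_X _ _ _

theorem jetLift_X_zero (T : Module.End ℂ M) (q : σ → M) (i : σ) :
    jetLift T q (MvPolynomial.X (i, 0)) = q i :=
  jetLift_X T q i 0

theorem jetLift_jetD {T : Module.End ℂ M}
    (hT : ∀ (b : Jet σ) (m : M), T (b • m) = b • T m + jetD σ b • m) (q : σ → M) (b : Jet σ) :
    jetLift T q (jetD σ b) = T (jetLift T q b) := by
  induction b using MvPolynomial.induction_on with
  | C x => simp [MvPolynomial.derivation_C]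
  | add b c hb hc => simp only [map_add, hb, hc]
  | mul_X b p hb =>
    have hX : jetLift T q (jetD σ (MvPolynomial.X p)) = T (jetLift T q (MvPolynomial.X p)) := by
      rw [jetD_X, jetLift_X, jetLift_X, pow_succ', Module.End.mul_apply]
    simp only [Derivation.leibniz, map_add, smul_eq_mul, hT, hb, hX]
    abel

theorem derivation_jetEmb (F : Derivation ℂ (Jet σ) (Jet σ)[X])
    (G : Derivation ℂ (MvPolynomial σ ℂ) (MvPolynomial σ ℂ))
    (h : ∀ i, F (MvPolynomial.X (i, 0)) = C (jetEmb σ (G (MvPolynomial.X i))))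
    (b : MvPolynomial σ ℂ) : F (jetEmb σ b) = C (jetEmb σ (G b)) := by
  induction b using MvPolynomial.induction_on with
  | C x => simp [jetEmb, MvPolynomial.derivation_C]
  | add b c hb hc => simp only [map_add, hb, hc]
  | mul_X b i hb =>
    rw [map_mul, jetEmb_X, Derivation.leibniz, Derivation.leibniz, hb, h]
    simp only [smul_eq_mul, smul_C, map_add, map_mul, jetEmb_X]

end Jets

section JetBracket

variable {σ : Type*} (P : MvPolynomial σ ℂ →ₗ[ℂ] MvPolynomial σ ℂ →ₗ[ℂ] MvPolynomial σ ℂ)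

/-- The λ-bracket `{X_{(l,0)} λ ·}` with a generator of the jet algebra on the left. -/
noncomputable def generatorBracket (l : σ) : Derivation ℂ (Jet σ) (Jet σ)[X] :=
  jetLift (addVar (jetD σ).toLinearMap) fun i =>
    C (jetEmb σ (P (MvPolynomial.X l) (MvPolynomial.X i)))

/-- The λ-bracket of the jet algebra induced by the Poisson bracket `P`: it is determined by
`generatorBracket` through skew-symmetry, sesquilinearity and the right Leibniz rule. -/
noncomputable def jetBracket : Jet σ →ₗ[ℂ] Derivation ℂ (Jet σ) (Jet σ)[X] :=
  jetLift (addVar (jetD σ).toLinearMap) ∘ₗ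
    LinearMap.pi fun l => skew (jetD σ).toLinearMap ∘ₗ (generatorBracket P l).toLinearMap

theorem generatorBracket_jetD (l : σ) (b : Jet σ) :
    generatorBracket P l (jetD σ b) = addVar (jetD σ).toLinearMap (generatorBracket P l b) :=
  jetLift_jetD (addVar_smul (jetD σ)) _ b

theorem jetBracket_jetD_right (a b : Jet σ) :
    jetBracket P a (jetD σ b) = addVar (jetD σ).toLinearMap (jetBracket P a b) :=
  jetLift_jetD (addVar_smul (jetD σ)) _ b

theorem jetBracket_X_zero_right (a : Jet σ) (l : σ) :
    jetBracket P a (MvPolynomial.X (l, 0)) =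
      skew (jetD σ).toLinearMap (generatorBracket P l a) :=
  jetLift_X_zero _ _ l

theorem jetBracket_jetD_left (a b : Jet σ) :
    jetBracket P (jetD σ a) b = -(X * jetBracket P a b) := by
  suffices h : jetBracket P (jetD σ a) = -((X : (Jet σ)[X]) • jetBracket P a) from
    DFunLike.congr_fun h b
  refine diffGenerates_jet.derivation_ext (jetBracket_jetD_right P _) (fun b => ?_) ?_
  · simp only [Derivation.neg_apply, Derivation.smul_apply, smul_eq_mul, Derivation.coeFn_coe,
      jetBracket_jetD_right, addVar_X_mul, map_neg]
  · rintro _ ⟨l, rfl⟩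
    simp only [Derivation.neg_apply, Derivation.smul_apply, smul_eq_mul, jetBracket_X_zero_right,
      generatorBracket_jetD, skew_addVar]

theorem jetBracket_mul_left (b c a : Jet σ) :
    jetBracket P (b * c) a =
      skewConj (jetD σ) b (jetBracket P c a) + skewConj (jetD σ) c (jetBracket P b a) := by
  suffices h : jetBracket P (b * c) = (skewConj (jetD σ) b).compDer (jetBracket P c) +
      (skewConj (jetD σ) c).compDer (jetBracket P b) from DFunLike.congr_fun h a
  refine diffGenerates_jet.derivation_ext (jetBracket_jetD_right P _) (fun a => ?_) ?_
  · change skewConj (jetD σ) b (jetBracket P c (jetD σ a)) +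
        skewConj (jetD σ) c (jetBracket P b (jetD σ a)) = addVar (jetD σ).toLinearMap
      (skewConj (jetD σ) b (jetBracket P c a) + skewConj (jetD σ) c (jetBracket P b a))
    rw [jetBracket_jetD_right, jetBracket_jetD_right, skewConj_addVar, skewConj_addVar, map_add]
  · rintro _ ⟨l, rfl⟩
    change _ = skewConj (jetD σ) b (jetBracket P c (MvPolynomial.X (l, 0))) +
      skewConj (jetD σ) c (jetBracket P b (MvPolynomial.X (l, 0)))
    simp only [jetBracket_X_zero_right, skewConj_apply, skew_skew, Derivation.leibniz, map_add]

variable {P} (hskew : ∀ a b, P a b = -P b a)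
  (hleib : ∀ a b c, P a (b * c) = P a b * c + b * P a c)

/-- The Hamiltonian derivation `{a, ·}` of a bracket satisfying the Leibniz rule. -/
noncomputable def hamiltonian (a : MvPolynomial σ ℂ) :
    Derivation ℂ (MvPolynomial σ ℂ) (MvPolynomial σ ℂ) :=
  Derivation.mk' (P a) fun b c => by rw [hleib, add_comm, smul_eq_mul, smul_eq_mul, mul_comm c]

include hleib in
theorem generatorBracket_jetEmb (l : σ) (b : MvPolynomial σ ℂ) :
    generatorBracket P l (jetEmb σ b) = C (jetEmb σ (P (MvPolynomial.X l) b)) :=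
  derivation_jetEmb _ (hamiltonian hleib (MvPolynomial.X l)) (jetLift_X_zero _ _) b

include hskew hleib

theorem jetBracket_jetEmb (a b : MvPolynomial σ ℂ) :
    jetBracket P (jetEmb σ a) (jetEmb σ b) = C (jetEmb σ (P a b)) := by
  refine derivation_jetEmb _ (hamiltonian hleib a) (fun l => ?_) b
  change _ = C (jetEmb σ (P a (MvPolynomial.X l)))
  rw [jetBracket_X_zero_right, generatorBracket_jetEmb hleib, skew_C, hskew a, map_neg, map_neg]

theorem jetBracket_X_zero_left (l : σ) :
    jetBracket P (MvPolynomial.X (l, 0)) = generatorBracket P l := by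
  refine diffGenerates_jet.derivation_ext (jetBracket_jetD_right P _) (generatorBracket_jetD P l) ?_
  rintro _ ⟨i, rfl⟩
  simp only [← jetEmb_X, jetBracket_jetEmb hskew hleib, generatorBracket_jetEmb hleib]

theorem jetBracket_skew (a b : Jet σ) :
    jetBracket P a b = skew (jetD σ).toLinearMap (jetBracket P b a) := by
  let F : Derivation ℂ (Jet σ) (Jet σ)[X] := Derivation.mk'
    { toFun := fun b => skew (jetD σ).toLinearMap (jetBracket P b a)
      map_add' := fun b c => by rw [map_add, Derivation.add_apply, map_add]
      map_smul' := fun x b => by rw [map_smul, Derivation.smul_apply, map_smul]; rfl }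
    fun b c => by
      change skew _ (jetBracket P (b * c) a) = b • skew _ (jetBracket P c a) + c • skew _ _
      rw [jetBracket_mul_left, map_add, skewConj_apply, skewConj_apply, skew_skew, skew_skew]
  suffices h : jetBracket P a = F from DFunLike.congr_fun h b
  refine diffGenerates_jet.derivation_ext (jetBracket_jetD_right P a) (fun b => ?_) ?_
  · change skew _ (jetBracket P (jetD σ b) a) = addVar _ (skew _ (jetBracket P b a))
    rw [jetBracket_jetD_left, map_neg, skew_X_mul, neg_neg]
  · rintro _ ⟨l, rfl⟩
    change _ = skew _ (jetBracket P (MvPolynomial.X (l, 0)) a)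
    rw [jetBracket_X_zero_right, jetBracket_X_zero_left hskew hleib]

theorem isSkewBracket_jetBracket : IsSkewBracket (jetD σ).toLinearMap (jetBracket P) where
  map_left := jetBracket_jetD_left P
  map_right := jetBracket_jetD_right P
  skew_eq := jetBracket_skew hskew hleib

theorem jacobi_jetBracket_jetEmb {a b c : MvPolynomial σ ℂ}
    (hjac : P a (P b c) = P b (P a c) + P (P a b) c) :
    Jacobi (jetBracket P) (jetEmb σ a) (jetEmb σ b) (jetEmb σ c) := by
  have hB := jetBracket_jetEmb hskew hleib
  simp only [Jacobi, hB, mapCoeff_C, Derivation.coeFn_coe, Bivariate.swap_C, map_C, bracketAdd_C,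
    evalAdd_C, hjac, map_add]

theorem jacobi_jetBracket (hjac : ∀ a b c, P a (P b c) = P b (P a c) + P (P a b) c)
    (a b c : Jet σ) : Jacobi (jetBracket P) a b c := by
  refine (isSkewBracket_jetBracket hskew hleib).jacobi_of_generators diffGenerates_jet ?_ a b c
  rintro _ ⟨i, rfl⟩ _ ⟨j, rfl⟩ _ ⟨l, rfl⟩
  simp only [← jetEmb_X]
  exact jacobi_jetBracket_jetEmb hskew hleib (hjac _ _ _)

theorem jetCond_product_jetBracket : JetCond σ P (product (jetBracket P)) := by
  have hB := isSkewBracket_jetBracket hskew hleib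
  refine ⟨hB.product_map_left, hB.product_map_right, hB.product_skew, product_mul_right _,
    fun a b => ?_, fun n hn a b => ?_⟩
  · rw [product_apply, jetBracket_jetEmb hskew hleib, coeff_C_zero, Nat.factorial_zero,
      Nat.cast_one, one_smul]
  · exact product_eq_zero_of_natDegree_lt _
      (by rwa [jetBracket_jetEmb hskew hleib, natDegree_C])

end JetBracket

section Uniqueness

variable {σ : Type*} {P : MvPolynomial σ ℂ →ₗ[ℂ] MvPolynomial σ ℂ →ₗ[ℂ] MvPolynomial σ ℂ}
  {mu nu : ℕ → Jet σ →ₗ[ℂ] Jet σ →ₗ[ℂ] Jet σ}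

/-- All products `μ_n(a, ·)` of a family obeying the right Leibniz rule, as one derivation. -/
noncomputable def productsDerivation
    (hmu : ∀ (n : ℕ) (a b c : Jet σ), mu n a (b * c) = mu n a b * c + b * mu n a c) (a : Jet σ) :
    Derivation ℂ (Jet σ) (ℕ → Jet σ) :=
  Derivation.mk' (LinearMap.pi fun n => mu n a) fun b c => funext fun n => by
    simp only [LinearMap.pi_apply, hmu, Pi.add_apply, Pi.smul_apply, smul_eq_mul]
    ring

theorem apply_eq_of_jetCond_of_eq_on_generators (hmu : JetCond σ P mu) (hnu : JetCond σ P nu)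
    {a : Jet σ} (h : ∀ n i, mu n a (MvPolynomial.X (i, 0)) = nu n a (MvPolynomial.X (i, 0)))
    (n : ℕ) (b : Jet σ) : mu n a b = nu n a b := by
  obtain ⟨-, hmu_jetD, -, hmu_mul, -, -⟩ := hmu
  obtain ⟨-, hnu_jetD, -, hnu_mul, -, -⟩ := hnu
  have heq : productsDerivation hmu_mul a = productsDerivation hnu_mul a := by
    refine diffGenerates_jet.derivation_ext
      (T := fun p n => jetD σ (p n) + (n : ℂ) • p (n - 1))
      (fun b => funext fun n => hmu_jetD n a b) (fun b => funext fun n => hnu_jetD n a b) ?_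
    rintro _ ⟨i, rfl⟩
    exact funext fun n => h n i
  exact congrFun (DFunLike.congr_fun heq b) n

theorem eq_of_jetCond (hmu : JetCond σ P mu) (hnu : JetCond σ P nu) : mu = nu := by
  have hgen (i j : σ) (n : ℕ) : mu n (MvPolynomial.X (i, 0)) (MvPolynomial.X (j, 0)) =
      nu n (MvPolynomial.X (i, 0)) (MvPolynomial.X (j, 0)) := by
    obtain ⟨-, -, -, -, hmu_zero, hmu_pos⟩ := hmu
    obtain ⟨-, -, -, -, hnu_zero, hnu_pos⟩ := hnu
    simp only [← jetEmb_X]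
    cases n with
    | zero => rw [hmu_zero, hnu_zero]
    | succ n => rw [hmu_pos _ n.succ_pos, hnu_pos _ n.succ_pos]
  have hleft (i : σ) (n : ℕ) (b : Jet σ) :
      mu n (MvPolynomial.X (i, 0)) b = nu n (MvPolynomial.X (i, 0)) b :=
    apply_eq_of_jetCond_of_eq_on_generators hmu hnu (fun n j => hgen i j n) n b
  have hright (a : Jet σ) (n : ℕ) (i : σ) :
      mu n a (MvPolynomial.X (i, 0)) = nu n a (MvPolynomial.X (i, 0)) := by
    obtain ⟨-, -, hmu_skew, -⟩ := hmu
    obtain ⟨-, -, hnu_skew, -⟩ := hnu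
    simp only [hmu_skew n a, hnu_skew n a, hleft]
  funext n
  exact LinearMap.ext₂ fun a b => apply_eq_of_jetCond_of_eq_on_generators hmu hnu (hright a) n b

end Uniqueness

end LambdaBracket

/-- for a Poisson bracket `{·,·}` on `A = MvPolynomial σ ℂ`, there
exists a unique family of ℂ-bilinear products `μ_n` on the jet algebra
`J = MvPolynomial (σ × ℕ) ℂ` satisfying sesquilinearity, antisymmetry, the right
Leibniz rule and the initial values `μ₀(ε a, ε b) = ε {a,b}`, `μ_n(ε a, ε b) = 0`
for `n ≥ 1`; moreover this family satisfies the finiteness and Jacobi axioms, so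
that `(J, ∂, {μ_n})` is a Lie* algebra whose products are derivations of the
multiplication — i.e. `J∞ A` canonically becomes a coisson (Poisson vertex)
algebra. -/
theorem stmt16 (σ : Type*)
    (P : MvPolynomial σ ℂ →ₗ[ℂ] MvPolynomial σ ℂ →ₗ[ℂ] MvPolynomial σ ℂ)
    (halt : ∀ a : MvPolynomial σ ℂ, P a a = 0)
    (hjac : ∀ a b c : MvPolynomial σ ℂ, P a (P b c) + P b (P c a) + P c (P a b) = 0)
    (hleib : ∀ a b c : MvPolynomial σ ℂ, P a (b * c) = P a b * c + b * P a c) :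
    (∃! mu : ℕ → Jet σ →ₗ[ℂ] Jet σ →ₗ[ℂ] Jet σ, JetCond σ P mu) ∧
    (∀ mu : ℕ → Jet σ →ₗ[ℂ] Jet σ →ₗ[ℂ] Jet σ, JetCond σ P mu →
      (∀ a b : Jet σ, ∃ N : ℕ, ∀ n ≥ N, mu n a b = 0) ∧
      (∀ (n m : ℕ) (a b c : Jet σ),
        mu n a (mu m b c) - mu m b (mu n a c)
          = ∑ᶠ j : ℕ, ((n.choose j : ℂ)) • mu (n + m - j) (mu j a b) c)) := by
  have hskew (a b) : P a b = -P b a := by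
    have h := halt (a + b)
    simp only [map_add, LinearMap.add_apply, halt, zero_add, add_zero] at h
    exact eq_neg_of_add_eq_zero_right h
  have hjacobi (a b c) : P a (P b c) = P b (P a c) + P (P a b) c := by
    have h := hjac a b c
    rw [hskew c a, map_neg, hskew c (P a b)] at h
    linear_combination h
  have hcond := LambdaBracket.jetCond_product_jetBracket hskew hleib
  refine ⟨⟨_, hcond, fun mu hmu => LambdaBracket.eq_of_jetCond hmu hcond⟩, fun mu hmu => ?_⟩
  obtain rfl := LambdaBracket.eq_of_jetCond hmu hcond
  refine ⟨fun a b => ⟨_, fun n => LambdaBracket.product_eq_zero_of_natDegree_lt _⟩, ?_⟩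
  exact fun n m a b c =>
    (LambdaBracket.jacobi_jetBracket hskew hleib hjacobi a b c).product_sub_product n m
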